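/- arXiv:0704.3327 — 2 statements merged into one kernel-verified Lean document; each statement's English description precedes it below -/
import Mathlib

section
/- Let k be a field, X a k-scheme, U ⊆ X an open subscheme, and m a natural number. Suppose the pair (X_m, u) represents the m-jet functor F_m^X, and let π_m : X_m → X be the associated projection. Then the open subscheme π_m^{-1}(U) of X_m, together with the restriction of u, represents F_m^U; equivalently, for every k-scheme Z, a morphism g : Z → X_m factors through π_m^{-1}(U) if and only if the corresponding morphism u ∘ (g × id) : Z ×_{Spec k} Spec(k[t]/(t^{m+1})) → X factors through U, and this gives bijections Hom_k(Z, π_m^{-1}(U)) ≅ Hom_k(Z ×_{Spec k} Spec(k[t]/(t^{m+1})), U), natural in Z. -/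
open AlgebraicGeometry CategoryTheory Limits

noncomputable section

variable (k : Type) [Field k] (m : ℕ)

/-- The ring `k[t]/(t^{m+1})`. -/
abbrev JetRing : Type := Polynomial k ⧸ Ideal.span {(Polynomial.X : Polynomial k) ^ (m + 1)}

/-- `Spec k`. -/
abbrev Speck := Spec (CommRingCat.of k)

/-- `Spec (k[t]/(t^{m+1}))`. -/
abbrev JetSpec := Spec (CommRingCat.of (JetRing k m))

/-- The structure morphism `Spec (k[t]/(t^{m+1})) → Spec k`. -/
def jetStruct : JetSpec k m ⟶ Speck k :=
  Spec.map (CommRingCat.ofHom (algebraMap k (JetRing k m)))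

/-- Evaluation at `t = 0`, `k[t]/(t^{m+1}) → k`, as a `k`-algebra homomorphism. -/
def jetEvalAlgHom : JetRing k m →ₐ[k] k :=
  Ideal.Quotient.liftₐ _ ((Polynomial.aeval (0 : k)).restrictScalars k)
    (by
      intro p hp
      rw [Ideal.mem_span_singleton] at hp
      obtain ⟨q, rfl⟩ := hp
      simp)

/-- The `k`-point `t = 0` of `Spec (k[t]/(t^{m+1}))`. -/
def jetZero : Speck k ⟶ JetSpec k m :=
  Spec.map (CommRingCat.ofHom (jetEvalAlgHom k m).toRingHom)

lemma jetZero_jetStruct : jetZero k m ≫ jetStruct k m = 𝟙 (Speck k) := by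
  rw [jetZero, jetStruct, ← Spec.map_comp, ← Spec.map_id]
  congr 1
  ext c
  simpa using (jetEvalAlgHom k m).commutes c

end

open AlgebraicGeometry CategoryTheory Limits in
/-- The projection `π_m : X_m → X` associated to a representation `(X_m, u)` of the
`m`-jet functor. -/
noncomputable def jetProj {k : Type} [Field k] {m : ℕ} {X Xm : Scheme}
    (sXm : Xm ⟶ Speck k) (u : pullback sXm (jetStruct k m) ⟶ X) : Xm ⟶ X :=
  pullback.lift (𝟙 Xm) (sXm ≫ jetZero k m)
    (by rw [Category.id_comp, Category.assoc, jetZero_jetStruct, Category.comp_id]) ≫ u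

/-!
The ideal `(t)` of `k[t]/(t^{m+1})` is nilpotent, so the point `t = 0` is all of
`Spec (k[t]/(t^{m+1}))`, and the zero section `Z ⟶ Z ×ₖ Spec (k[t]/(t^{m+1}))` is surjective for
every `Z`. Composing the zero section with `u ∘ (g × id)` gives `π_m ∘ g`. Hence these two
morphisms to `X` have the same set-theoretic image, and one of them factors through the open
subscheme `U` exactly when the other does.
-/

universe v

section BaseChangeSection

open AlgebraicGeometry CategoryTheory Limits

variable {S T W X Z : Scheme.{v}} {p : T ⟶ S} {s : S ⟶ T} (hs : s ≫ p = 𝟙 S)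

/-- The section of `Z ×_S T ⟶ Z` obtained from a section `s` of `p : T ⟶ S` by base change along
`f : Z ⟶ S`. For `s = jetZero k m` it is the zero section, and then
`jetProj f u = baseChangeSection _ f ≫ u` by definition. -/
noncomputable def baseChangeSection (f : Z ⟶ S) : Z ⟶ pullback f p :=
  pullback.lift (𝟙 Z) (f ≫ s) (by rw [Category.id_comp, Category.assoc, hs, Category.comp_id])

lemma baseChangeSection_fst (f : Z ⟶ S) : baseChangeSection hs f ≫ pullback.fst f p = 𝟙 Z :=
  pullback.lift_fst _ _ _

lemma baseChangeSection_snd (f : Z ⟶ S) : baseChangeSection hs f ≫ pullback.snd f p = f ≫ s :=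
  pullback.lift_snd _ _ _

lemma isPullback_baseChangeSection (f : Z ⟶ S) :
    IsPullback f (baseChangeSection hs f) s (pullback.snd f p) := by
  have outer : IsPullback (baseChangeSection hs f ≫ pullback.fst f p) f f (s ≫ p) := by
    rw [baseChangeSection_fst, hs]
    exact .of_id_fst
  exact (outer.of_right (baseChangeSection_snd hs f) (.of_hasPullback f p)).flip

lemma surjective_baseChangeSection [Surjective s] (f : Z ⟶ S) :
    Surjective (baseChangeSection hs f) :=
  MorphismProperty.of_isPullback (isPullback_baseChangeSection hs f) inferInstance

lemma baseChangeSection_comp_map {q : W ⟶ S} {f : Z ⟶ S} {g : Z ⟶ W} (hg : g ≫ q = f) :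
    baseChangeSection hs f ≫
        pullback.map f p q p g (𝟙 T) (𝟙 S) (by rw [Category.comp_id, hg]) (by simp) =
      g ≫ baseChangeSection hs q := by
  apply pullback.hom_ext
  · rw [Category.assoc, Category.assoc, baseChangeSection_fst, pullback.map, pullback.lift_fst,
      ← Category.assoc, baseChangeSection_fst, Category.id_comp, Category.comp_id]
  · rw [Category.assoc, Category.assoc, baseChangeSection_snd, pullback.map, pullback.lift_snd,
      Category.comp_id, baseChangeSection_snd, ← Category.assoc, hg]

lemma range_subset_preimage_iff_range_map_comp_subset [Surjective s] {q : W ⟶ S}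
    (u : pullback q p ⟶ X) (A : Set X) {f : Z ⟶ S} {g : Z ⟶ W} (hg : g ≫ q = f) :
    Set.range g ⊆ (baseChangeSection hs q ≫ u) ⁻¹' A ↔
      Set.range (pullback.map f p q p g (𝟙 T) (𝟙 S)
        (by rw [Category.comp_id, hg]) (by simp) ≫ u) ⊆ A := by
  have := surjective_baseChangeSection hs f
  have range_eq := range_eq_range_of_surjective (g ≫ baseChangeSection hs q ≫ u)
    (pullback.map f p q p g (𝟙 T) (𝟙 S) (by rw [Category.comp_id, hg]) (by simp) ≫ u)
    (baseChangeSection hs f)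
    (by rw [← Category.assoc, baseChangeSection_comp_map hs hg, Category.assoc])
  rw [← range_eq, Scheme.Hom.comp_base g, TopCat.coe_comp, Set.range_comp, Set.image_subset_iff]

/-- Here `p : T ⟶ S` generalizes `Spec (k[t]/(t^{m+1})) ⟶ Spec k`, and the first `∃!` says that
`(W, u)` represents the functor `Z ↦ Hom (Z ×_S T, X)` at the single morphism `h ≫ U.ι`. -/
theorem jet_scheme_of_open_subscheme_general [Surjective s] (q : W ⟶ S) (u : pullback q p ⟶ X)
    (U : X.Opens) (f : Z ⟶ S) :
    (∀ (g : Z ⟶ W) (hg : g ≫ q = f),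
        Set.range g ⊆ (baseChangeSection hs q ≫ u) ⁻¹' (U : Set X) ↔
          Set.range (pullback.map f p q p g (𝟙 T) (𝟙 S)
            (by rw [Category.comp_id, hg]) (by simp) ≫ u) ⊆ (U : Set X)) ∧
      ∀ h : pullback f p ⟶ U.toScheme,
        (∃! g : { g : Z ⟶ W // g ≫ q = f },
          pullback.map f p q p g.1 (𝟙 T) (𝟙 S)
            (by rw [Category.comp_id, g.2]) (by simp) ≫ u = h ≫ U.ι) →
        ∃! g : { g : Z ⟶ W // g ≫ q = f ∧
            Set.range g ⊆ (baseChangeSection hs q ≫ u) ⁻¹' (U : Set X) },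
          pullback.map f p q p g.1 (𝟙 T) (𝟙 S)
            (by rw [Category.comp_id, g.2.1]) (by simp) ≫ u = h ≫ U.ι := by
  have range_iff (g : Z ⟶ W) (hg : g ≫ q = f) :=
    range_subset_preimage_iff_range_map_comp_subset hs u (U : Set X) hg
  refine ⟨range_iff, ?_⟩
  rintro h ⟨⟨g, hg⟩, hgh, unique⟩
  have range_h : Set.range (h ≫ U.ι) ⊆ (U : Set X) := by
    rintro _ ⟨y, rfl⟩
    exact (h y).2
  refine ⟨⟨g, hg, (range_iff g hg).2 (hgh ▸ range_h)⟩, hgh, ?_⟩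
  rintro ⟨g', hg', _⟩ hgh'
  obtain rfl : g' = g := Subtype.mk.inj (unique ⟨g', hg'⟩ hgh')
  rfl

end BaseChangeSection

section ClosedPoint

open AlgebraicGeometry

lemma surjective_specMap_of_ker_le_nilradical {R A : CommRingCat.{v}} (φ : R ⟶ A)
    (surj : Function.Surjective φ.hom) (ker_le : RingHom.ker φ.hom ≤ nilradical R) :
    Surjective (Spec.map φ) := by
  refine ⟨Set.range_eq_univ.1 ?_⟩
  exact (range_comap_of_surjective _ φ.hom surj).trans
    ((PrimeSpectrum.zeroLocus_eq_univ_iff _).2 ker_le)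

variable (k : Type) [Field k] (m : ℕ)

lemma jetEvalAlgHom_mk (q : Polynomial k) :
    jetEvalAlgHom k m (Ideal.Quotient.mk _ q) = q.coeff 0 := by
  rw [Polynomial.coeff_zero_eq_aeval_zero]
  rfl

lemma surjective_jetEvalAlgHom : Function.Surjective (jetEvalAlgHom k m) :=
  fun c => ⟨algebraMap k _ c, (jetEvalAlgHom k m).commutes c⟩

lemma ker_jetEvalAlgHom_le_nilradical :
    RingHom.ker (jetEvalAlgHom k m) ≤ nilradical (JetRing k m) := by
  intro x hx
  obtain ⟨q, rfl⟩ := Ideal.Quotient.mk_surjective x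
  have X_dvd : Polynomial.X ∣ q := by
    rwa [Polynomial.X_dvd_iff, ← jetEvalAlgHom_mk k m]
  refine ⟨m + 1, ?_⟩
  have X_pow_dvd : Polynomial.X ^ (m + 1) ∣ q ^ (m + 1) := pow_dvd_pow_of_dvd X_dvd (m + 1)
  rw [Ideal.zero_eq_bot, Ideal.mem_bot, ← map_pow, Ideal.Quotient.eq_zero_iff_mem]
  exact Ideal.mem_span_singleton.2 X_pow_dvd

lemma surjective_jetZero : Surjective (jetZero k m) :=
  surjective_specMap_of_ker_le_nilradical _ (surjective_jetEvalAlgHom k m)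
    (ker_jetEvalAlgHom_le_nilradical k m)

end ClosedPoint

open AlgebraicGeometry CategoryTheory Limits in
/-- Let `(X_m, u)` represent the `m`-jet functor of a `k`-scheme `X`, with
projection `π_m : X_m → X`, and let `U ⊆ X` be an open subscheme. Then (a) a `k`-morphism
`g : Z → X_m` factors through the open subscheme `π_m^{-1}(U)` if and only if
`u ∘ (g × id)` factors through `U`, and (b) `π_m^{-1}(U)` with the restriction of `u`
represents the `m`-jet functor of `U`: every `k`-morphism
`h : Z ×_{Spec k} Spec(k[t]/(t^{m+1})) → U` corresponds to a unique `k`-morphism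
`Z → X_m` factoring through `π_m^{-1}(U)`. -/
theorem jet_scheme_of_open_subscheme (k : Type) [Field k] (m : ℕ)
    (X : Scheme) (sX : X ⟶ Speck k) (U : X.Opens)
    (Xm : Scheme) (sXm : Xm ⟶ Speck k)
    (u : pullback sXm (jetStruct k m) ⟶ X)
    (hu : u ≫ sX = pullback.fst sXm (jetStruct k m) ≫ sXm)
    (rep : ∀ (Z : Scheme) (sZ : Z ⟶ Speck k) (h : pullback sZ (jetStruct k m) ⟶ X),
      h ≫ sX = pullback.fst sZ (jetStruct k m) ≫ sZ →
      ∃! g : { g : Z ⟶ Xm // g ≫ sXm = sZ },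
        pullback.map sZ (jetStruct k m) sXm (jetStruct k m) g.1
          (𝟙 (JetSpec k m)) (𝟙 (Speck k))
          (by rw [Category.comp_id, g.2]) (by simp) ≫ u = h) :
    (∀ (Z : Scheme) (sZ : Z ⟶ Speck k) (g : Z ⟶ Xm) (hg : g ≫ sXm = sZ),
        Set.range g.base ⊆ (jetProj sXm u).base ⁻¹' (U : Set X) ↔
          Set.range (pullback.map sZ (jetStruct k m) sXm (jetStruct k m) g
            (𝟙 (JetSpec k m)) (𝟙 (Speck k))
            (by rw [Category.comp_id, hg]) (by simp) ≫ u).base ⊆ (U : Set X)) ∧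
      ∀ (Z : Scheme) (sZ : Z ⟶ Speck k) (h : pullback sZ (jetStruct k m) ⟶ U.toScheme),
        h ≫ U.ι ≫ sX = pullback.fst sZ (jetStruct k m) ≫ sZ →
        ∃! g : { g : Z ⟶ Xm // g ≫ sXm = sZ ∧
            Set.range g.base ⊆ (jetProj sXm u).base ⁻¹' (U : Set X) },
          pullback.map sZ (jetStruct k m) sXm (jetStruct k m) g.1
            (𝟙 (JetSpec k m)) (𝟙 (Speck k))
            (by rw [Category.comp_id, g.2.1]) (by simp) ≫ u = h ≫ U.ι := by
  have := surjective_jetZero k m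
  have general {Z : Scheme} (sZ : Z ⟶ Speck k) :=
    jet_scheme_of_open_subscheme_general (jetZero_jetStruct k m) sXm u U sZ
  exact ⟨fun Z sZ => (general sZ).1, fun Z sZ h hh =>
    (general sZ).2 h (rep Z sZ (h ≫ U.ι) (by rw [Category.assoc, hh]))⟩
end

section
/- Let k be an algebraically closed field of characteristic zero and R a finitely generated commutative k-algebra that is an integral domain. Let R_∞ be a commutative k-algebra corepresenting the arc functor of R, i.e., equipped with bijections Hom_{k-alg}(R_∞, A) ≅ Hom_{k-alg}(R, A[[t]]) natural in the commutative k-algebra A. Then the prime spectrum Spec R_∞ is an irreducible topological space. (This is the affine form of the theorem that in characteristic zero the space of arcs of a variety is irreducible.) -/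
/-- The `k`-algebra homomorphism `A[[t]] → B[[t]]` induced by a `k`-algebra
homomorphism `f : A → B` (apply `f` to coefficients). -/
def psMapAlgHom {k A B : Type} [CommRing k] [CommRing A] [CommRing B]
    [Algebra k A] [Algebra k B] (f : A →ₐ[k] B) : PowerSeries A →ₐ[k] PowerSeries B :=
  { PowerSeries.map (f : A →+* B) with
    commutes' := fun c => by
      simp [PowerSeries.algebraMap_apply] }

/-!
An arc `γ` lies in the closure of an arc `α` when every polynomial relation between the
coefficients of `α` holds for `γ`, so it suffices to find one arc, over a domain, whose closure
contains every arc over a field.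

Given an arc `γ`, the family `γ(X + Y)` of arcs in `Y` parametrized by `X` specializes to `γ` at
`X = 0`, and its center `Y = 0` is the arc `γ(X)` itself; hence `γ` is a specialization of an arc
contained in a closed subvariety and centered at its generic point `p`. To move from `p` to a
prime `q ⋖ p`, take a discrete valuation ring through `q ⊂ p` in the normalization of `R ⧸ q`. In
characteristic zero its completion is `κ⟦X⟧`, which gives an arc `g` with generic point `q` and
center `p`. Field extensions being formally smooth, `γ` extends to an arc of `Spec κ`;
substituting it into the coefficients of `g` yields a two-parameter family which is `γ` in one
direction and sweeps out the subvariety of `q` in the other. Thus `γ` is a specialization of an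
arc centered at `q`, and inductively of one centered at the generic point of `Spec R`.

Finally the residue field of the generic point is formally étale over a polynomial ring `k[xᵢ]`, so
arcs centered there are given by their center and arbitrary values for the higher coefficients of
the `xᵢ`. All of them are therefore specializations of the single arc for which these coefficients
are independent variables.
-/

universe u

open PowerSeries IsLocalRing

section PowerSeries

variable {k A B S : Type*} [CommRing k] [CommRing A] [CommRing B] [CommRing S]
  [Algebra k A] [Algebra k B] [Algebra k S]

lemma ker_constantCoeff_eq_span_X : RingHom.ker (constantCoeff (R := S)) = Ideal.span {X} := by
  ext f
  rw [RingHom.mem_ker, Ideal.mem_span_singleton, X_dvd_iff]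

lemma quotientMk_span_X_eq_iff (f g : S⟦X⟧) :
    Ideal.Quotient.mk (Ideal.span {X}) f = Ideal.Quotient.mk (Ideal.span {X}) g ↔
      constantCoeff f = constantCoeff g := by
  rw [Ideal.Quotient.eq, ← ker_constantCoeff_eq_span_X, RingHom.mem_ker, map_sub, sub_eq_zero]

lemma exists_algHom_powerSeries_of_formallySmooth [Algebra A B] [IsScalarTower k A B]
    [Algebra.FormallySmooth A B]
    (a : A →ₐ[k] S⟦X⟧) (b : B →ₐ[k] S) (hab : ∀ x, b (algebraMap A B x) = constantCoeff (a x)) :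
    ∃ d : B →ₐ[k] S⟦X⟧,
      (∀ x, d (algebraMap A B x) = a x) ∧ ∀ y, constantCoeff (d y) = b y := by
  let : Algebra A S⟦X⟧ := a.toAlgebra
  have : IsScalarTower k A S⟦X⟧ := .of_algebraMap_eq fun c ↦ (a.commutes c).symm
  let b' : B →ₐ[A] S⟦X⟧ ⧸ Ideal.span {(X : S⟦X⟧)} :=
    { (Ideal.Quotient.mk _).comp ((C (R := S)).comp (b : B →+* S)) with
      commutes' := fun x ↦ (quotientMk_span_X_eq_iff _ _).mpr <| (constantCoeff_C _).trans (hab x) }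
  obtain ⟨d, hd⟩ := Algebra.FormallySmooth.exists_mkₐ_comp_eq_of_isAdicComplete b'
  refine ⟨d.restrictScalars k, d.commutes, fun y ↦ ?_⟩
  have hdy : Ideal.Quotient.mk _ (d y) = Ideal.Quotient.mk (Ideal.span {X}) (C (b y)) :=
    congr($hd y)
  simpa using (quotientMk_span_X_eq_iff _ _).mp hdy

lemma ringHom_powerSeries_ext_of_formallyUnramified [Algebra A B] [Algebra.FormallyUnramified A B]
    {d d' : B →+* S⟦X⟧} (h : ∀ x, d (algebraMap A B x) = d' (algebraMap A B x))
    (h₀ : ∀ y, constantCoeff (d y) = constantCoeff (d' y)) : d = d' := by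
  let : Algebra A S⟦X⟧ := (d.comp (algebraMap A B)).toAlgebra
  let dA : B →ₐ[A] S⟦X⟧ := { d with commutes' := fun _ ↦ rfl }
  let dA' : B →ₐ[A] S⟦X⟧ := { d' with commutes' := fun x ↦ (h x).symm }
  have hdA : dA = dA' := by
    refine Algebra.FormallyUnramified.ext_of_iInf (I := Ideal.span {X}) ?_
      fun y ↦ (quotientMk_span_X_eq_iff _ _).mpr (h₀ y)
    simpa using IsHausdorff.iInf_pow_smul (I := Ideal.span {(X : S⟦X⟧)}) (M := S⟦X⟧) inferInstance
  exact RingHom.ext fun y ↦ congr($hdA y)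

/-- The constant coefficient of a power series, as an algebra homomorphism. -/
noncomputable def constantCoeffAlgHom (k S : Type*) [CommRing k] [CommRing S] [Algebra k S] :
    S⟦X⟧ →ₐ[k] S :=
  { constantCoeff (R := S) with commutes' := fun c ↦ constantCoeff_C (algebraMap k S c) }

lemma constantCoeffAlgHom_apply (f : S⟦X⟧) : constantCoeffAlgHom k S f = constantCoeff f := rfl

lemma coeff_mapAlgHom (φ : A →ₐ[k] B) (n : ℕ) (f : A⟦X⟧) :
    coeff n (mapAlgHom φ f) = φ (coeff n f) := by
  rw [mapAlgHom_apply, coeff_map]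
  rfl

lemma constantCoeffAlgHom_comp_mapAlgHom (φ : A →ₐ[k] B) :
    (constantCoeffAlgHom k B).comp (mapAlgHom φ) = φ.comp (constantCoeffAlgHom k A) :=
  AlgHom.ext fun f ↦ by
    simp only [AlgHom.comp_apply, constantCoeffAlgHom_apply,
      ← coeff_zero_eq_constantCoeff_apply, coeff_mapAlgHom]

lemma mapAlgHom_injective {φ : A →ₐ[k] B} (hφ : Function.Injective φ) :
    Function.Injective (mapAlgHom φ) := fun f g hfg ↦ by
  ext n
  apply hφ
  rw [← coeff_mapAlgHom, hfg, coeff_mapAlgHom]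

/-- The exchange of variables `f(X, Y) ↦ f(Y, X)` on power series over power series. -/
noncomputable def swapVariables (k S : Type*) [CommRing k] [CommRing S] [Algebra k S] :
    S⟦X⟧⟦X⟧ →ₐ[k] S⟦X⟧⟦X⟧ where
  toFun f := mk fun n ↦ mk fun m ↦ coeff n (coeff m f)
  map_one' := by
    ext n m
    simp only [coeff_mk, coeff_one]
    split_ifs <;> simp_all [coeff_one]
  map_zero' := by ext n m; simp
  map_add' f g := by ext n m; simp
  map_mul' f g := by
    ext n m
    simp only [coeff_mk, coeff_mul, map_sum]
    rw [Finset.sum_comm]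
  commutes' c := by
    ext n m
    simp only [PowerSeries.algebraMap_apply, coeff_mk, coeff_C]
    split_ifs <;> simp_all [coeff_C]

lemma coeff_coeff_swapVariables (f : S⟦X⟧⟦X⟧) (m n : ℕ) :
    coeff m (coeff n (swapVariables k S f)) = coeff n (coeff m f) := by
  simp [swapVariables]

lemma constantCoeffAlgHom_comp_swapVariables :
    (constantCoeffAlgHom k S⟦X⟧).comp (swapVariables k S) =
      mapAlgHom (constantCoeffAlgHom k S) := by
  ext f m
  simp only [AlgHom.comp_apply, coeff_mapAlgHom, constantCoeffAlgHom_apply,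
    ← coeff_zero_eq_constantCoeff_apply, coeff_coeff_swapVariables]

lemma mapAlgHom_constantCoeffAlgHom_comp_swapVariables :
    (mapAlgHom (constantCoeffAlgHom k S)).comp (swapVariables k S) =
      constantCoeffAlgHom k S⟦X⟧ := by
  ext f n
  simp only [AlgHom.comp_apply, coeff_mapAlgHom, constantCoeffAlgHom_apply,
    ← coeff_zero_eq_constantCoeff_apply, coeff_coeff_swapVariables]

/-- The `n`-th Hasse derivative (divided derivative) of a power series. -/
noncomputable def powerSeriesHasseDeriv (n : ℕ) (f : S⟦X⟧) : S⟦X⟧ :=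
  mk fun m ↦ (m + n).choose n * coeff (m + n) f

lemma coeff_powerSeriesHasseDeriv_eq_trunc (f : S⟦X⟧) {m n d : ℕ} (h : m + n < d) :
    coeff m (powerSeriesHasseDeriv n f) = (Polynomial.hasseDeriv n (trunc d f)).coeff m := by
  simp [powerSeriesHasseDeriv, Polynomial.hasseDeriv_coeff, coeff_trunc, h]

lemma powerSeriesHasseDeriv_mul (n : ℕ) (f g : S⟦X⟧) :
    powerSeriesHasseDeriv n (f * g) = ∑ ij ∈ Finset.HasAntidiagonal.antidiagonal n,
      powerSeriesHasseDeriv ij.1 f * powerSeriesHasseDeriv ij.2 g := by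
  ext m
  have hfg : coeff m (powerSeriesHasseDeriv n (f * g)) =
      (Polynomial.hasseDeriv n (trunc (m + n + 1) f * trunc (m + n + 1) g)).coeff m := by
    rw [Polynomial.hasseDeriv_coeff, powerSeriesHasseDeriv, coeff_mk,
      coeff_mul_eq_coeff_trunc_mul_trunc f g (Nat.lt_succ_self _), ← Polynomial.coe_mul,
      Polynomial.coeff_coe]
  rw [hfg, Polynomial.hasseDeriv_mul, Polynomial.finsetSum_coeff, map_sum]
  refine Finset.sum_congr rfl fun ij hij ↦ ?_
  rw [Polynomial.coeff_mul, coeff_mul]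
  refine Finset.sum_congr rfl fun ab hab ↦ ?_
  rw [Finset.HasAntidiagonal.mem_antidiagonal] at hij hab
  rw [coeff_powerSeriesHasseDeriv_eq_trunc f (d := m + n + 1) (by omega),
    coeff_powerSeriesHasseDeriv_eq_trunc g (d := m + n + 1) (by omega)]

/-- The Taylor expansion `f(X) ↦ f(X + Y)`, as a power series in `Y` over power series in `X`. -/
noncomputable def taylorExpansion (k S : Type*) [CommRing k] [CommRing S] [Algebra k S] :
    S⟦X⟧ →ₐ[k] S⟦X⟧⟦X⟧ where
  toFun f := mk fun n ↦ powerSeriesHasseDeriv n f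
  map_one' := by
    ext n m
    rcases n with _ | n <;> simp [powerSeriesHasseDeriv, coeff_one]
  map_zero' := by ext n m; simp [powerSeriesHasseDeriv]
  map_add' f g := by ext n m; simp [powerSeriesHasseDeriv, mul_add]
  map_mul' f g := by
    ext1 n
    rw [coeff_mk, powerSeriesHasseDeriv_mul, coeff_mul]
    simp only [coeff_mk]
  commutes' c := by
    ext n m
    rcases n with _ | n <;> simp [powerSeriesHasseDeriv, PowerSeries.algebraMap_apply, coeff_C]

lemma constantCoeffAlgHom_comp_taylorExpansion :
    (constantCoeffAlgHom k S⟦X⟧).comp (taylorExpansion k S) = AlgHom.id k S⟦X⟧ := by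
  ext f m
  simp [constantCoeffAlgHom_apply, taylorExpansion, powerSeriesHasseDeriv,
    ← coeff_zero_eq_constantCoeff_apply]

lemma mapAlgHom_constantCoeffAlgHom_comp_taylorExpansion :
    (mapAlgHom (constantCoeffAlgHom k S)).comp (taylorExpansion k S) = AlgHom.id k S⟦X⟧ := by
  ext f n
  simp [coeff_mapAlgHom, constantCoeffAlgHom_apply, taylorExpansion, powerSeriesHasseDeriv,
    ← coeff_zero_eq_constantCoeff_apply]

end PowerSeries

section CompleteLocal

lemma exists_algHom_powerSeries_X_eq {κ W : Type*} [CommRing κ] [CommRing W] [Algebra κ W]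
    {I : Ideal W} [IsAdicComplete I W] {a : W} (ha : a ∈ I) : ∃ Ψ : κ⟦X⟧ →ₐ[κ] W, Ψ X = a := by
  let : WithIdeal W := ⟨I⟩
  let : UniformSpace κ := ⊥
  have : DiscreteTopology κ := ⟨rfl⟩
  have hI : IsAdic I := rfl
  obtain ⟨_, _⟩ := hI.isAdicComplete_iff.mp ‹_›
  have hφ : Continuous (algebraMap κ W) := continuous_of_discreteTopology
  have hev : HasEval a := by
    refine (hI.hasBasis_nhds_zero.tendsto_right_iff).mpr fun n _ ↦ ?_
    filter_upwards [Filter.eventually_ge_atTop n] with m hm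
    exact Ideal.pow_le_pow_right hm (Ideal.pow_mem_pow ha m)
  refine ⟨{ eval₂Hom hφ hev with commutes' := fun c ↦ ?_ }, ?_⟩
  · change eval₂Hom hφ hev (C c) = _
    rw [coe_eval₂Hom, eval₂_C]
  · change eval₂Hom hφ hev X = _
    rw [coe_eval₂Hom, eval₂_X]

lemma powerSeries_ringHom_injective {κ W : Type*} [Field κ] [CommRing W] (Ψ : κ⟦X⟧ →+* W)
    (h : ¬IsNilpotent (Ψ X)) : Function.Injective Ψ := by
  refine (injective_iff_map_eq_zero Ψ).mpr fun f hf ↦ ?_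
  by_contra hf₀
  obtain ⟨n, hn⟩ := IsDiscreteValuationRing.associated_pow_irreducible hf₀
    (X_prime (R := κ)).irreducible
  exact h ⟨n, by rw [← map_pow, ← zero_dvd_iff, ← hf]; exact map_dvd Ψ hn.dvd⟩

lemma exists_powerSeries_algEquiv {κ W : Type*} [Field κ] [CommRing W] [Algebra κ W]
    (ρ : W →ₐ[κ] κ) [IsAdicComplete (RingHom.ker ρ) W] {π : W}
    (hπ : RingHom.ker ρ = Ideal.span {π}) (hnil : ¬IsNilpotent π) :
    ∃ e : κ⟦X⟧ ≃ₐ[κ] W, ∀ f, ρ (e f) = constantCoeff f := by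
  have hπρ : π ∈ RingHom.ker ρ := hπ ▸ Ideal.mem_span_singleton_self π
  obtain ⟨Ψ, hΨX⟩ := exists_algHom_powerSeries_X_eq (κ := κ) hπρ
  have hmap : (Ideal.span {(X : κ⟦X⟧)}).map (Ψ : κ⟦X⟧ →+* W) = RingHom.ker ρ := by
    rw [Ideal.map_span, Set.image_singleton, hπ]
    exact congrArg (fun w ↦ Ideal.span {w}) hΨX
  have hconst (f : κ⟦X⟧) : ρ (Ψ f) = constantCoeff f := by
    have hC : Ψ (C (constantCoeff f)) = algebraMap κ W (constantCoeff f) :=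
      Ψ.commutes (constantCoeff f)
    conv_lhs => rw [eq_X_mul_shift_add_const f]
    rw [map_add, map_mul, hΨX, hC, map_add, map_mul, (RingHom.mem_ker).mp hπρ, zero_mul, zero_add,
      AlgHom.commutes, Algebra.algebraMap_self_apply]
  have hsurj : Function.Surjective Ψ := by
    have : IsHausdorff ((Ideal.span {(X : κ⟦X⟧)}).map (Ψ : κ⟦X⟧ →+* W)) W := by
      rw [hmap]; infer_instance
    refine surjective_of_mk_map_comp_surjective (I := Ideal.span {X}) (Ψ : κ⟦X⟧ →+* W) fun w ↦ ?_
    obtain ⟨w, rfl⟩ := Ideal.Quotient.mk_surjective w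
    refine ⟨C (ρ w), Ideal.Quotient.eq.mpr ?_⟩
    rw [hmap, RingHom.mem_ker, map_sub, sub_eq_zero]
    exact (hconst _).trans (constantCoeff_C _)
  have hinj : Function.Injective Ψ :=
    powerSeries_ringHom_injective (Ψ : κ⟦X⟧ →+* W) (by simpa [hΨX] using hnil)
  exact ⟨.ofBijective Ψ ⟨hinj, hsurj⟩, hconst⟩

theorem exists_injective_algHom_residueField_powerSeries (k V : Type*) [CommRing k] [CommRing V]
    [IsDomain V] [IsDiscreteValuationRing V] [Algebra k V]
    [Algebra.FormallySmooth k (ResidueField V)] :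
    ∃ Φ : V →ₐ[k] (ResidueField V)⟦X⟧,
      Function.Injective Φ ∧ ∀ v, constantCoeff (Φ v) = residue V v := by
  let κ := ResidueField V
  let W := AdicCompletion (maximalIdeal V) V
  have hfg : (maximalIdeal V).FG := (maximalIdeal V).fg_of_isNoetherianRing
  obtain ⟨σ, hσ⟩ : ∃ σ : κ →ₐ[k] W, ∀ c, AdicCompletion.evalOneₐ (maximalIdeal V) (σ c) = c := by
    obtain ⟨σ, hσ⟩ := Algebra.FormallySmooth.exists_adicCompletionEvalOneₐ_comp_eq
      (R := k) (A := κ) (I := maximalIdeal V) (AlgHom.id k κ)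
    exact ⟨σ, fun c ↦ congr($hσ c)⟩
  let : Algebra κ W := σ.toAlgebra
  have : IsScalarTower k κ W := .of_algebraMap_eq fun c ↦ (σ.commutes c).symm
  let ρ : W →ₐ[κ] κ :=
    { (AdicCompletion.evalOneₐ (maximalIdeal V) : W →+* V ⧸ maximalIdeal V) with commutes' := hσ }
  have hker : RingHom.ker ρ = (maximalIdeal V).map (algebraMap V W) :=
    AdicCompletion.ker_evalOneₐ_eq_map _ hfg
  have : IsAdicComplete (RingHom.ker ρ) W := hker ▸ AdicCompletion.isAdicComplete_self _ hfg
  obtain ⟨π, hπ⟩ := IsDiscreteValuationRing.exists_irreducible V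
  have hinj : Function.Injective (algebraMap V W) := AdicCompletion.of_injective _ V
  have hspan : RingHom.ker ρ = Ideal.span {algebraMap V W π} := by
    have h := congrArg (Ideal.map (algebraMap V W)) hπ.maximalIdeal_eq
    rwa [Ideal.map_span, Set.image_singleton, ← hker] at h
  have hnil : ¬IsNilpotent (algebraMap V W π) := by
    rw [IsNilpotent.map_iff hinj]
    exact fun h ↦ hπ.ne_zero h.eq_zero
  obtain ⟨e, he⟩ := exists_powerSeries_algEquiv ρ hspan hnil
  refine ⟨((e.symm : W →ₐ[κ] κ⟦X⟧).restrictScalars k).comp (Algebra.algHom k V W),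
    e.symm.injective.comp hinj, fun v ↦ ?_⟩
  exact (he _).symm.trans (congrArg ρ (e.apply_symm_apply _))

end CompleteLocal

section DiscreteValuationRing

theorem isNoetherianRing_integralClosure_of_finiteType (k : Type*) {R E : Type*} [Field k]
    [CharZero k] [CommRing R] [Algebra k R] [Algebra.FiniteType k R] [IsDomain R] [Field E]
    [Algebra R E] [IsFractionRing R E] : IsNoetherianRing (integralClosure R E) := by
  obtain ⟨s, g, hg, hfin⟩ := exists_finite_inj_algHom_of_fg k R
  let A := MvPolynomial (Fin s) k
  let : Algebra A R := g.toAlgebra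
  let : Algebra A E := ((algebraMap R E).comp (algebraMap A R)).toAlgebra
  have : IsScalarTower A R E := .of_algebraMap_eq fun _ ↦ rfl
  have : Module.Finite A R := hfin
  have : FaithfulSMul A R := (faithfulSMul_iff_algebraMap_injective A R).mpr hg
  have : FaithfulSMul A E := .trans A R E
  let : Algebra (FractionRing A) E := FractionRing.liftAlgebra A E
  have : FiniteDimensional (FractionRing A) E := .of_isLocalization A R (nonZeroDivisors A)
  have : CharZero (FractionRing A) := algebraRat.charZero _
  have : IsNoetherianRing (integralClosure A E) :=
    integralClosure.isNoetherianRing (A := A) (K := FractionRing A) E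
  have hclosure (x : E) : IsIntegral A x ↔ IsIntegral R x :=
    ⟨IsIntegral.tower_top, isIntegral_trans x⟩
  exact isNoetherianRing_of_surjective (integralClosure A E) _
    ((integralClosure A E).val.toRingHom.codRestrict (integralClosure R E)
      fun x ↦ (hclosure x).mp x.2)
    fun x ↦ ⟨⟨x, (hclosure x).mpr x.2⟩, rfl⟩

lemma eq_maximalIdeal_localization_of_bot_covBy {N : Type*} [CommRing N] [IsDomain N]
    {q : PrimeSpectrum N} (hq : ⊥ ⋖ q) (P : Ideal (Localization.AtPrime q.asIdeal)) (hP₀ : P ≠ ⊥)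
    (hP : P.IsPrime) : P = maximalIdeal (Localization.AtPrime q.asIdeal) := by
  let V := Localization.AtPrime q.asIdeal
  rw [← Localization.AtPrime.eq_maximalIdeal_iff_under_eq]
  let Q : PrimeSpectrum N := ⟨P.under N, inferInstance⟩
  have hQq : Q ≤ q := by
    have h : P.under N ≤ (maximalIdeal V).under N := Ideal.comap_mono (le_maximalIdeal hP.ne_top)
    rwa [Localization.AtPrime.under_maximalIdeal] at h
  have hQ : Q ≠ ⊥ := fun h ↦ hP₀ <| by
    rw [← IsLocalization.map_under q.asIdeal.primeCompl V P]
    exact (congrArg _ (congrArg PrimeSpectrum.asIdeal h)).trans Ideal.map_bot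
  exact congrArg PrimeSpectrum.asIdeal (hq.eq_or_eq bot_le hQq |>.resolve_left hQ)

lemma isDiscreteValuationRing_localization_of_bot_covBy {N : Type*} [CommRing N] [IsDomain N]
    [IsNoetherianRing N] [IsIntegrallyClosed N] {q : PrimeSpectrum N} (hq : ⊥ ⋖ q) :
    IsDiscreteValuationRing (Localization.AtPrime q.asIdeal) := by
  let V := Localization.AtPrime q.asIdeal
  have hclosed : IsIntegrallyClosed V :=
    isIntegrallyClosed_of_isLocalization _ _ q.asIdeal.primeCompl_le_nonZeroDivisors
  have hnormal : IsIntegrallyClosed V ∧ ∀ P : Ideal V, P ≠ ⊥ → P.IsPrime → P = maximalIdeal V :=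
    ⟨hclosed, eq_maximalIdeal_localization_of_bot_covBy hq⟩
  have : IsPrincipalIdealRing V :=
    ((tfae_of_isNoetherianRing_of_isLocalRing_of_isDomain V).out 3 0).mp hnormal
  have hfield : maximalIdeal V ≠ ⊥ := fun h ↦ hq.ne <| PrimeSpectrum.ext <| by
    rw [← Localization.AtPrime.under_maximalIdeal (I := q.asIdeal), h]
    exact (Ideal.comap_bot_of_injective _ (IsLocalization.injective V
      q.asIdeal.primeCompl_le_nonZeroDivisors)).symm
  exact { not_a_field' := hfield }

lemma exists_isDiscreteValuationRing_of_bot_covBy (k : Type*) {N : Type u} [CommRing k]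
    [CommRing N] [IsDomain N] [IsNoetherianRing N] [IsIntegrallyClosed N] [Algebra k N]
    {q : PrimeSpectrum N} (hq : ⊥ ⋖ q) :
    ∃ (V : Type u) (_ : CommRing V) (_ : IsDomain V) (_ : IsDiscreteValuationRing V)
      (_ : Algebra k V) (f : N →ₐ[k] V),
      Function.Injective f ∧ (maximalIdeal V).comap f = q.asIdeal :=
  ⟨Localization.AtPrime q.asIdeal, inferInstance, inferInstance,
    isDiscreteValuationRing_localization_of_bot_covBy hq, inferInstance, Algebra.algHom k N _,
    IsLocalization.injective _ q.asIdeal.primeCompl_le_nonZeroDivisors,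
    Localization.AtPrime.under_maximalIdeal⟩

lemma exists_covBy_comap_eq_of_isIntegral {R S : Type*} [CommRing R] [CommRing S] [Algebra R S]
    [Algebra.IsIntegral R S] {Q : PrimeSpectrum S} {p : PrimeSpectrum R}
    (h : PrimeSpectrum.comap (algebraMap R S) Q ⋖ p) :
    ∃ P, Q ⋖ P ∧ PrimeSpectrum.comap (algebraMap R S) P = p := by
  obtain ⟨P, hQP, hP, hPp⟩ :=
    Ideal.exists_ideal_over_prime_of_isIntegral p.asIdeal Q.asIdeal h.le
  have hPp' : PrimeSpectrum.comap (algebraMap R S) ⟨P, hP⟩ = p := PrimeSpectrum.ext hPp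
  refine ⟨⟨P, hP⟩, ⟨lt_of_le_of_ne hQP ?_, fun c hQc hcP ↦ ?_⟩, hPp'⟩
  · rintro rfl
    exact h.ne hPp'
  · have hcp : c.comap (algebraMap R S) < p := hPp' ▸ Ideal.IsIntegral.comap_lt_comap hcP
    exact h.2 (Ideal.IsIntegral.comap_lt_comap hQc) hcp

theorem exists_isDiscreteValuationRing_of_covBy (k : Type*) {R : Type u} [Field k] [CharZero k]
    [CommRing R] [Algebra k R] [Algebra.FiniteType k R] {q p : PrimeSpectrum R} (hqp : q ⋖ p) :
    ∃ (V : Type u) (_ : CommRing V) (_ : IsDomain V) (_ : IsDiscreteValuationRing V)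
      (_ : Algebra k V) (f : R →ₐ[k] V),
      RingHom.ker f = q.asIdeal ∧ (maximalIdeal V).comap f = p.asIdeal := by
  let D := R ⧸ q.asIdeal
  let E := FractionRing D
  let N := integralClosure D E
  have : IsNoetherianRing N := isNoetherianRing_integralClosure_of_finiteType k
  have : IsIntegrallyClosed N := integralClosure.isIntegrallyClosedOfFiniteExtension E
  have : Algebra.IsIntegral R N := .trans D
  have hker : RingHom.ker (algebraMap R N) = q.asIdeal := by
    rw [IsScalarTower.algebraMap_eq R D N, RingHom.ker_comp_of_injective _
      (FaithfulSMul.algebraMap_injective D N)]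
    exact Ideal.mk_ker
  have hbot : PrimeSpectrum.comap (algebraMap R N) ⊥ = q := PrimeSpectrum.ext hker
  obtain ⟨P, hP, hPp⟩ := exists_covBy_comap_eq_of_isIntegral (hbot ▸ hqp)
  obtain ⟨V, _, _, _, _, g, hg, hgP⟩ := exists_isDiscreteValuationRing_of_bot_covBy k hP
  refine ⟨V, inferInstance, inferInstance, inferInstance, inferInstance,
    g.comp (Algebra.algHom k R N), ?_, ?_⟩
  · exact (RingHom.ker_comp_of_injective (algebraMap R N) hg).trans hker
  · rw [← hPp]
    exact congrArg (Ideal.comap (algebraMap R N)) hgP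

end DiscreteValuationRing

section Arc

variable {k R A B C : Type*} [CommRing k] [CommRing R] [CommRing A] [CommRing B] [CommRing C]
  [Algebra k R] [Algebra k A] [Algebra k B] [Algebra k C]

/-- The center of an arc `γ : Spec A⟦X⟧ → Spec R`: its restriction to `X = 0`. -/
noncomputable def arcCenter (γ : R →ₐ[k] A⟦X⟧) : R →ₐ[k] A :=
  (constantCoeffAlgHom k A).comp γ

lemma arcCenter_mapAlgHom_comp (f : A →ₐ[k] B) (γ : R →ₐ[k] A⟦X⟧) :
    arcCenter ((mapAlgHom f).comp γ) = f.comp (arcCenter γ) := by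
  rw [arcCenter, ← AlgHom.comp_assoc, constantCoeffAlgHom_comp_mapAlgHom]
  rfl

/-- The arc `γ` is contained in the closed subscheme `Spec R ⧸ p`, and its center is the generic
point of that subscheme. -/
structure IsCenteredAtGenericPoint (γ : R →ₐ[k] A⟦X⟧) (p : Ideal R) : Prop where
  le_ker : p ≤ RingHom.ker γ
  ker_arcCenter_le : RingHom.ker (arcCenter γ) ≤ p

lemma IsCenteredAtGenericPoint.mapAlgHom_comp {γ : R →ₐ[k] A⟦X⟧} {p : Ideal R}
    (hγ : IsCenteredAtGenericPoint γ p) {f : A →ₐ[k] B} (hf : Function.Injective f) :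
    IsCenteredAtGenericPoint ((mapAlgHom f).comp γ) p where
  le_ker r hr := by
    rw [RingHom.mem_ker, AlgHom.comp_apply, RingHom.mem_ker.mp (hγ.le_ker hr), map_zero]
  ker_arcCenter_le := by
    rw [arcCenter_mapAlgHom_comp]
    exact (RingHom.ker_comp_of_injective (arcCenter γ : R →+* A) hf).trans_le hγ.ker_arcCenter_le

/-- The homomorphism from the polynomial ring on symbols `(r, n)` recording the coefficients of an
arc. The arc space is a closed subscheme of the spectrum of this polynomial ring, and the kernel of
this homomorphism is the ideal of the image of `Spec A` there. -/
noncomputable def arcCoeffHom (γ : R →ₐ[k] A⟦X⟧) : MvPolynomial (R × ℕ) k →ₐ[k] A :=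
  MvPolynomial.aeval fun p ↦ coeff p.2 (γ p.1)

lemma arcCoeffHom_mapAlgHom_comp (f : A →ₐ[k] B) (γ : R →ₐ[k] A⟦X⟧) :
    arcCoeffHom ((mapAlgHom f).comp γ) = f.comp (arcCoeffHom γ) := by
  ext p
  simp [arcCoeffHom, coeff_mapAlgHom]

/-- The arc `β` lies in the closure of the arc `α`: every polynomial relation between the
coefficients of `α` holds for `β`. -/
def ArcSpecializes (α : R →ₐ[k] A⟦X⟧) (β : R →ₐ[k] B⟦X⟧) : Prop :=
  RingHom.ker (arcCoeffHom α) ≤ RingHom.ker (arcCoeffHom β)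

lemma ArcSpecializes.trans {α : R →ₐ[k] A⟦X⟧} {β : R →ₐ[k] B⟦X⟧} {γ : R →ₐ[k] C⟦X⟧}
    (hαβ : ArcSpecializes α β) (hβγ : ArcSpecializes β γ) : ArcSpecializes α γ :=
  le_trans hαβ hβγ

lemma arcSpecializes_mapAlgHom_comp (f : A →ₐ[k] B) (γ : R →ₐ[k] A⟦X⟧) :
    ArcSpecializes γ ((mapAlgHom f).comp γ) := fun q hq ↦ by
  rw [RingHom.mem_ker, arcCoeffHom_mapAlgHom_comp, AlgHom.comp_apply, RingHom.mem_ker.mp hq,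
    map_zero]

lemma mapAlgHom_comp_arcSpecializes {f : A →ₐ[k] B} (hf : Function.Injective f)
    (γ : R →ₐ[k] A⟦X⟧) : ArcSpecializes ((mapAlgHom f).comp γ) γ := fun q hq ↦ by
  rw [RingHom.mem_ker, arcCoeffHom_mapAlgHom_comp, AlgHom.comp_apply] at hq
  exact (map_eq_zero_iff f hf).mp hq

end Arc

section Generization

lemma IsCenteredAtGenericPoint.exists_field {k R : Type*} {A : Type u} [CommRing k]
    [CommRing R] [Algebra k R] [CommRing A] [IsDomain A] [Algebra k A] {β : R →ₐ[k] A⟦X⟧}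
    {p : Ideal R} (hβ : IsCenteredAtGenericPoint β p) :
    ∃ (K : Type u) (_ : Field K) (_ : Algebra k K) (α : R →ₐ[k] K⟦X⟧),
      IsCenteredAtGenericPoint α p ∧ ArcSpecializes α β := by
  let ι : A →ₐ[k] FractionRing A := Algebra.algHom k A (FractionRing A)
  have hι : Function.Injective ι := IsFractionRing.injective A (FractionRing A)
  exact ⟨FractionRing A, inferInstance, inferInstance, (mapAlgHom ι).comp β,
    hβ.mapAlgHom_comp hι, mapAlgHom_comp_arcSpecializes hι β⟩

theorem exists_arc_isCenteredAtGenericPoint_ker {k R : Type*} {A : Type u} [CommRing k]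
    [CommRing R] [Algebra k R] [CommRing A] [IsDomain A] [Algebra k A] (γ : R →ₐ[k] A⟦X⟧) :
    ∃ (K : Type u) (_ : Field K) (_ : Algebra k K) (α : R →ₐ[k] K⟦X⟧),
      IsCenteredAtGenericPoint α (RingHom.ker γ) ∧ ArcSpecializes α γ := by
  let β : R →ₐ[k] A⟦X⟧⟦X⟧ := (taylorExpansion k A).comp γ
  have hcenter : arcCenter β = γ := by
    rw [arcCenter, ← AlgHom.comp_assoc, constantCoeffAlgHom_comp_taylorExpansion, AlgHom.id_comp]
  have hspec : (mapAlgHom (constantCoeffAlgHom k A)).comp β = γ := by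
    rw [← AlgHom.comp_assoc, mapAlgHom_constantCoeffAlgHom_comp_taylorExpansion, AlgHom.id_comp]
  have hβ : IsCenteredAtGenericPoint β (RingHom.ker γ) := by
    refine ⟨fun r hr ↦ ?_, hcenter ▸ le_rfl⟩
    rw [RingHom.mem_ker, AlgHom.comp_apply, RingHom.mem_ker.mp hr, map_zero]
  have hβγ : ArcSpecializes β γ := hspec ▸ arcSpecializes_mapAlgHom_comp _ β
  obtain ⟨K, _, _, α, hα, hαβ⟩ := hβ.exists_field
  exact ⟨K, inferInstance, inferInstance, α, hα, hαβ.trans hβγ⟩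

theorem formallySmooth_of_charZero (K L : Type*) [Field K] [CharZero K] [Field L] [Algebra K L] :
    Algebra.FormallySmooth K L := by
  obtain ⟨s, hs⟩ := exists_isTranscendenceBasis K L
  have := hs.isAlgebraic_field
  exact .of_algebraicIndependent_of_isSeparable hs.1

lemma exists_field_amalgam (F : Type*) (κ L : Type u) [Field F] [Field κ] [Field L]
    [Algebra F κ] [Algebra F L] :
    ∃ (K : Type u) (_ : Field K) (_ : Algebra F K),
      Nonempty (κ →ₐ[F] K) ∧ Nonempty (L →ₐ[F] K) := by
  obtain ⟨M, _⟩ := Ideal.exists_maximal (TensorProduct F κ L)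
  exact ⟨_, Ideal.Quotient.field M, inferInstance,
    ⟨(Ideal.Quotient.mkₐ F M).comp Algebra.TensorProduct.includeLeft⟩,
    ⟨(Ideal.Quotient.mkₐ F M).comp Algebra.TensorProduct.includeRight⟩⟩

lemma exists_extension_algHom_powerSeries {k F : Type*} {κ L : Type u} [CommRing k] [Field F]
    [CharZero F] [Field κ] [Field L] [Algebra k F] [Algebra k κ] [Algebra k L] [Algebra F κ]
    [IsScalarTower k F κ] (δ : F →ₐ[k] L⟦X⟧) :
    ∃ (K : Type u) (_ : Field K) (_ : Algebra k K) (ι : L →ₐ[k] K) (ε : κ →ₐ[k] K⟦X⟧),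
      ∀ x, ε (algebraMap F κ x) = mapAlgHom ι (δ x) := by
  let : Algebra F L := (arcCenter δ).toAlgebra
  have : IsScalarTower k F L := .of_algebraMap_eq fun c ↦ ((arcCenter δ).commutes c).symm
  obtain ⟨K, _, _, ⟨i⟩, ⟨j⟩⟩ := exists_field_amalgam F κ L
  let : Algebra k K := ((algebraMap F K).comp (algebraMap k F)).toAlgebra
  have : IsScalarTower k F K := .of_algebraMap_eq fun _ ↦ rfl
  have := formallySmooth_of_charZero F κ
  let ι : L →ₐ[k] K := j.restrictScalars k
  have hcenter (x : F) : i (algebraMap F κ x) = constantCoeff (mapAlgHom ι (δ x)) := calc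
    i (algebraMap F κ x) = ι (arcCenter δ x) := (i.commutes x).trans (j.commutes x).symm
    _ = arcCenter ((mapAlgHom ι).comp δ) x := by rw [arcCenter_mapAlgHom_comp]; rfl
  obtain ⟨ε, hε, -⟩ :=
    exists_algHom_powerSeries_of_formallySmooth ((mapAlgHom ι).comp δ) (i.restrictScalars k) hcenter
  exact ⟨K, inferInstance, inferInstance, ι, ε, hε⟩

lemma IsCenteredAtGenericPoint.exists_algHom_residueField {k R L : Type*} [CommRing k]
    [CommRing R] [Field L] [Algebra k R] [Algebra k L] {p : Ideal R} [p.IsPrime]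
    {γ : R →ₐ[k] L⟦X⟧} (hγ : IsCenteredAtGenericPoint γ p) :
    ∃ δ : p.ResidueField →ₐ[k] L⟦X⟧, ∀ r, δ (algebraMap R p.ResidueField r) = γ r := by
  refine ⟨Ideal.ResidueField.liftₐ p γ hγ.le_ker fun r hr ↦ ?_, fun r ↦ by simp⟩
  have hr₀ : constantCoeff (γ r) ≠ 0 := fun h ↦ hr (hγ.ker_arcCenter_le h)
  exact isUnit_iff_constantCoeff.mpr hr₀.isUnit

lemma exists_extension_algHom_powerSeries_comp_arcCenter {k R : Type*} {κ L : Type u}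
    [Field k] [CharZero k] [CommRing R] [Algebra k R] [Field κ] [Algebra k κ] [Field L]
    [Algebra k L] (g : R →ₐ[k] κ⟦X⟧) (γ : R →ₐ[k] L⟦X⟧)
    (hγ : IsCenteredAtGenericPoint γ (RingHom.ker (arcCenter g))) :
    ∃ (K : Type u) (_ : Field K) (_ : Algebra k K) (ι : L →ₐ[k] K) (ε : κ →ₐ[k] K⟦X⟧),
      ε.comp (arcCenter g) = (mapAlgHom ι).comp γ := by
  let p := RingHom.ker (arcCenter g)
  have : p.IsPrime := RingHom.ker_isPrime _
  let F := p.ResidueField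
  have : CharZero F := charZero_of_injective_algebraMap (algebraMap k F).injective
  obtain ⟨δ, hδ⟩ := hγ.exists_algHom_residueField
  have hunit : p.primeCompl ≤ (IsUnit.submonoid κ).comap (arcCenter g) := fun r hr ↦
    (show arcCenter g r ≠ 0 from hr).isUnit
  let c : F →ₐ[k] κ := Ideal.ResidueField.liftₐ p (arcCenter g) le_rfl hunit
  let : Algebra F κ := c.toAlgebra
  have : IsScalarTower k F κ := .of_algebraMap_eq fun x ↦ (c.commutes x).symm
  obtain ⟨K, _, _, ι, ε, hε⟩ := exists_extension_algHom_powerSeries (κ := κ) δ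
  refine ⟨K, inferInstance, inferInstance, ι, ε, AlgHom.ext fun r ↦ ?_⟩
  calc ε (arcCenter g r) = ε (c (algebraMap R F r)) := by
        rw [Ideal.ResidueField.liftₐ_algebraMap]
    _ = mapAlgHom ι (γ r) := (hε _).trans (congrArg _ (hδ r))

theorem exists_arc_deformation {k R : Type*} {κ L : Type u} [Field k] [CharZero k]
    [CommRing R] [Algebra k R] [Field κ] [Algebra k κ] [Field L] [Algebra k L]
    (g : R →ₐ[k] κ⟦X⟧) (γ : R →ₐ[k] L⟦X⟧)
    (hγ : IsCenteredAtGenericPoint γ (RingHom.ker (arcCenter g))) :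
    ∃ (K : Type u) (_ : Field K) (_ : Algebra k K) (α : R →ₐ[k] K⟦X⟧),
      IsCenteredAtGenericPoint α (RingHom.ker g) ∧ ArcSpecializes α γ := by
  obtain ⟨M, _, _, ι, ε, hε⟩ := exists_extension_algHom_powerSeries_comp_arcCenter g γ hγ
  let c₀ := constantCoeffAlgHom k M
  let β : R →ₐ[k] M⟦X⟧⟦X⟧ := (swapVariables k M).comp ((mapAlgHom ε).comp g)
  have hcenter : arcCenter β = (mapAlgHom (c₀.comp ε)).comp g := by
    rw [arcCenter, ← AlgHom.comp_assoc, constantCoeffAlgHom_comp_swapVariables]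
    ext r n
    simp only [AlgHom.comp_apply, coeff_mapAlgHom, c₀]
  have hspec : (mapAlgHom c₀).comp β = (mapAlgHom ι).comp γ := by
    rw [← AlgHom.comp_assoc, mapAlgHom_constantCoeffAlgHom_comp_swapVariables,
      ← AlgHom.comp_assoc, constantCoeffAlgHom_comp_mapAlgHom, AlgHom.comp_assoc]
    exact hε
  have hβ : IsCenteredAtGenericPoint β (RingHom.ker g) := by
    refine ⟨fun r hr ↦ ?_, ?_⟩
    · simp only [RingHom.mem_ker, AlgHom.comp_apply, RingHom.mem_ker.mp hr, map_zero, β]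
    · rw [hcenter]
      exact (RingHom.ker_comp_of_injective (g : R →+* κ⟦X⟧)
        (mapAlgHom_injective (c₀.comp ε).injective)).le
  have hβγ : ArcSpecializes β γ := (hspec ▸ arcSpecializes_mapAlgHom_comp c₀ β).trans
    (mapAlgHom_comp_arcSpecializes ι.injective γ)
  obtain ⟨K, _, _, α, hα, hαβ⟩ := hβ.exists_field
  exact ⟨K, inferInstance, inferInstance, α, hα, hαβ.trans hβγ⟩

theorem exists_arc_generization_of_covBy {k : Type*} {R L : Type u} [Field k] [CharZero k]
    [CommRing R] [Algebra k R] [Algebra.FiniteType k R] [Field L] [Algebra k L]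
    {q p : PrimeSpectrum R} (hqp : q ⋖ p) {γ : R →ₐ[k] L⟦X⟧}
    (hγ : IsCenteredAtGenericPoint γ p.asIdeal) :
    ∃ (K : Type u) (_ : Field K) (_ : Algebra k K) (α : R →ₐ[k] K⟦X⟧),
      IsCenteredAtGenericPoint α q.asIdeal ∧ ArcSpecializes α γ := by
  obtain ⟨V, _, _, _, _, f, hf, hfp⟩ := exists_isDiscreteValuationRing_of_covBy k hqp
  have := formallySmooth_of_charZero k (ResidueField V)
  obtain ⟨Φ, hΦ, hΦ₀⟩ := exists_injective_algHom_residueField_powerSeries k V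
  let g : R →ₐ[k] (ResidueField V)⟦X⟧ := Φ.comp f
  have hg : RingHom.ker g = q.asIdeal := (RingHom.ker_comp_of_injective (f : R →+* V) hΦ).trans hf
  have hg₀ : RingHom.ker (arcCenter g) = p.asIdeal := by
    rw [← hfp]
    ext r
    exact (congrArg (· = 0) (hΦ₀ (f r))).to_iff.trans (residue_eq_zero_iff _)
  exact hg ▸ exists_arc_deformation g γ (hg₀ ▸ hγ)

lemma exists_le_covBy_of_lt_primeSpectrum {R : Type*} [CommRing R] [IsNoetherianRing R]
    {q p : PrimeSpectrum R} (hqp : q < p) : ∃ q', q ≤ q' ∧ q' ⋖ p := by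
  have : WellFoundedGT (PrimeSpectrum R) :=
    StrictMono.wellFoundedGT (f := PrimeSpectrum.asIdeal) fun _ _ h ↦ h
  exact exists_le_covBy_of_lt hqp

lemma wellFoundedLT_primeSpectrum (R : Type*) [CommRing R] [IsNoetherianRing R] :
    WellFoundedLT (PrimeSpectrum R) :=
  StrictMono.wellFoundedLT (f := fun p ↦ p.asIdeal.height) fun _ p hqp ↦ by
    have := Ideal.finiteHeight_of_isNoetherianRing p.asIdeal
    exact Ideal.height_strict_mono_of_isPrime_of_isPrime hqp

theorem exists_arc_generization {k : Type*} {R L : Type u} [Field k] [CharZero k]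
    [CommRing R] [Algebra k R] [Algebra.FiniteType k R] [Field L] [Algebra k L]
    {q p : PrimeSpectrum R} (hqp : q ≤ p) {γ : R →ₐ[k] L⟦X⟧}
    (hγ : IsCenteredAtGenericPoint γ p.asIdeal) :
    ∃ (K : Type u) (_ : Field K) (_ : Algebra k K) (α : R →ₐ[k] K⟦X⟧),
      IsCenteredAtGenericPoint α q.asIdeal ∧ ArcSpecializes α γ := by
  have : IsNoetherianRing R := Algebra.FiniteType.isNoetherianRing k R
  have := wellFoundedLT_primeSpectrum R
  induction p using WellFoundedLT.induction generalizing L with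
  | ind p ih =>
  obtain rfl | hqp := hqp.eq_or_lt
  · exact ⟨L, inferInstance, inferInstance, γ, hγ, le_rfl⟩
  obtain ⟨q', hqq', hq'p⟩ := exists_le_covBy_of_lt_primeSpectrum hqp
  obtain ⟨M, _, _, β, hβ, hβγ⟩ := exists_arc_generization_of_covBy hq'p hγ
  obtain ⟨K, _, _, α, hα, hαβ⟩ := ih q' hq'p.lt hqq' hβ
  exact ⟨K, inferInstance, inferInstance, α, hα, hαβ.trans hβγ⟩

end Generization

section GenericArc

open scoped IntermediateField.algebraAdjoinAdjoin in
theorem exists_formallyEtale_mvPolynomial (k E : Type*) [Field k] [CharZero k] [Field E]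
    [Algebra k E] :
    ∃ (σ : Set E) (_ : Algebra (MvPolynomial σ k) E), IsScalarTower k (MvPolynomial σ k) E ∧
      Algebra.FormallyEtale (MvPolynomial σ k) E := by
  obtain ⟨σ, hσ⟩ := exists_isTranscendenceBasis k E
  have := hσ.isAlgebraic_field
  let A := Algebra.adjoin k (Set.range ((↑) : σ → E))
  let F := IntermediateField.adjoin k (Set.range ((↑) : σ → E))
  have : Algebra.FormallyEtale A F := .of_isLocalization (nonZeroDivisors _)
  have : Algebra.FormallyEtale F E := .of_isSeparable F E
  have : Algebra.FormallyEtale A E := .comp A F E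
  let : Algebra (MvPolynomial σ k) E := (MvPolynomial.aeval ((↑) : σ → E)).toAlgebra
  let : Algebra (MvPolynomial σ k) A := hσ.1.aevalEquiv.toRingEquiv.toRingHom.toAlgebra
  have : IsScalarTower (MvPolynomial σ k) A E :=
    .of_algebraMap_eq fun f ↦ (hσ.1.algebraMap_aevalEquiv f).symm
  have : Algebra.FormallyEtale (MvPolynomial σ k) A :=
    .of_equiv (AlgEquiv.ofRingEquiv (f := hσ.1.aevalEquiv.toRingEquiv) fun _ ↦ rfl :
      MvPolynomial σ k ≃ₐ[MvPolynomial σ k] A)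
  exact ⟨σ, inferInstance, .of_algebraMap_eq fun c ↦ (MvPolynomial.aeval_C _ c).symm,
    .comp _ A E⟩

theorem exists_universal_algHom_powerSeries (k E σ : Type*) [CommRing k] [CommRing E]
    [Algebra k E] [Algebra (MvPolynomial σ k) E] [IsScalarTower k (MvPolynomial σ k) E]
    [Algebra.FormallyEtale (MvPolynomial σ k) E] :
    ∃ θ : E →ₐ[k] (MvPolynomial (σ × ℕ) E)⟦X⟧, ∀ {A : Type*} [CommRing A] [Algebra k A]
      (δ : E →ₐ[k] A⟦X⟧), ∃ f : MvPolynomial (σ × ℕ) E →ₐ[k] A, (mapAlgHom f).comp θ = δ := by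
  let P := MvPolynomial σ k
  let x (i : σ) : E := algebraMap P E (.X i)
  let B := MvPolynomial (σ × ℕ) E
  let ξ (i : σ) : B⟦X⟧ :=
    mk fun n ↦ n.casesOn (algebraMap E B (x i)) fun m ↦ .X (i, m)
  let b : E →ₐ[k] B := Algebra.algHom k E B
  have hξ : b.comp (Algebra.algHom k P E) =
      (constantCoeffAlgHom k B).comp (MvPolynomial.aeval ξ) := by
    ext1 i
    calc algebraMap E B (x i) = coeff 0 (ξ i) := by
          rw [coeff_mk]
          rfl
      _ = constantCoeffAlgHom k B (MvPolynomial.aeval ξ (.X i)) := by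
          rw [MvPolynomial.aeval_X, coeff_zero_eq_constantCoeff_apply]
          rfl
  obtain ⟨θ, hθ, hθ₀⟩ :=
    exists_algHom_powerSeries_of_formallySmooth (MvPolynomial.aeval ξ) b fun f ↦ congr($hξ f)
  refine ⟨θ, fun {A} _ _ δ ↦ ?_⟩
  let f : B →ₐ[k] A :=
    MvPolynomial.aevalTower (arcCenter δ) fun j ↦ coeff (j.2 + 1) (δ (x j.1))
  have hf₀ (y : E) : f (b y) = constantCoeff (δ y) := MvPolynomial.aevalTower_C _ _ y
  have hf : (mapAlgHom f).comp (MvPolynomial.aeval ξ) = δ.comp (Algebra.algHom k P E) := by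
    ext i n
    rw [AlgHom.comp_apply, MvPolynomial.aeval_X, coeff_mapAlgHom, coeff_mk]
    cases n with
    | zero => exact (hf₀ (x i)).trans (coeff_zero_eq_constantCoeff_apply _).symm
    | succ n => exact MvPolynomial.aevalTower_X _ _ (i, n)
  refine ⟨f, AlgHom.coe_ringHom_injective <|
    ringHom_powerSeries_ext_of_formallyUnramified (A := P) (fun p ↦ ?_) fun y ↦ ?_⟩
  · exact (congrArg (mapAlgHom f) (hθ p)).trans congr($hf p)
  · calc constantCoeff (mapAlgHom f (θ y)) = f (constantCoeff (θ y)) :=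
          congr($(constantCoeffAlgHom_comp_mapAlgHom f) (θ y))
      _ = constantCoeff (δ y) := by rw [hθ₀, hf₀]

theorem exists_generic_arc (k : Type*) {R : Type u} [Field k] [CharZero k] [CommRing R]
    [Algebra k R] (p : Ideal R) [p.IsPrime] :
    ∃ (B : Type u) (_ : CommRing B) (_ : IsDomain B) (_ : Algebra k B) (θ : R →ₐ[k] B⟦X⟧),
      ∀ {L : Type*} [Field L] [Algebra k L] (γ : R →ₐ[k] L⟦X⟧),
        IsCenteredAtGenericPoint γ p → ArcSpecializes θ γ := by
  obtain ⟨σ, _, _, _⟩ := exists_formallyEtale_mvPolynomial k p.ResidueField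
  obtain ⟨θ, hθ⟩ := exists_universal_algHom_powerSeries k p.ResidueField σ
  refine ⟨_, inferInstance, inferInstance, inferInstance,
    θ.comp (Algebra.algHom k R p.ResidueField), fun {L} _ _ γ hγ ↦ ?_⟩
  obtain ⟨δ, hδ⟩ := hγ.exists_algHom_residueField
  obtain ⟨f, rfl⟩ := hθ δ
  have hγθ : (mapAlgHom f).comp (θ.comp (Algebra.algHom k R p.ResidueField)) = γ :=
    AlgHom.ext hδ
  exact hγθ ▸ arcSpecializes_mapAlgHom_comp f _

theorem exists_arc_arcSpecializes (k : Type*) (R : Type u) [Field k] [CharZero k] [CommRing R]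
    [IrreducibleSpace (PrimeSpectrum R)] [Algebra k R] [Algebra.FiniteType k R] :
    ∃ (B : Type u) (_ : CommRing B) (_ : IsDomain B) (_ : Algebra k B) (θ : R →ₐ[k] B⟦X⟧),
      ∀ {L : Type u} [Field L] [Algebra k L] (γ : R →ₐ[k] L⟦X⟧), ArcSpecializes θ γ := by
  have hN : (nilradical R).IsPrime :=
    PrimeSpectrum.irreducibleSpace_iff_isPrime_nilradical.mp inferInstance
  obtain ⟨B, _, _, _, θ, hθ⟩ := exists_generic_arc k (nilradical R)
  refine ⟨B, inferInstance, inferInstance, inferInstance, θ, fun γ ↦ ?_⟩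
  have hγ : (RingHom.ker γ).IsPrime := RingHom.ker_isPrime _
  obtain ⟨M, _, _, β, hβ, hβγ⟩ := exists_arc_isCenteredAtGenericPoint_ker γ
  obtain ⟨K, _, _, α, hα, hαβ⟩ := exists_arc_generization (q := ⟨nilradical R, hN⟩)
    (p := ⟨RingHom.ker γ, hγ⟩) (nilradical_le_prime _) hβ
  exact (hθ α hα).trans (hαβ.trans hβγ)

end GenericArc

section ArcSpace

lemma exists_mapAlgHom_val_comp_eq {k R A : Type*} [CommRing k] [CommRing R] [CommRing A]
    [Algebra k R] [Algebra k A] (γ : R →ₐ[k] A⟦X⟧) {S : Subalgebra k A}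
    (hS : (arcCoeffHom γ).range ≤ S) : ∃ β : R →ₐ[k] S⟦X⟧, (mapAlgHom S.val).comp β = γ := by
  have hcoeff (r : R) (n : ℕ) : coeff n (γ r) ∈ S :=
    hS ⟨.X (r, n), MvPolynomial.aeval_X _ _⟩
  have hinj : Function.Injective (mapAlgHom S.val) := mapAlgHom_injective Subtype.val_injective
  have hγ (r : R) : γ r ∈ (mapAlgHom S.val).range := by
    refine ⟨mk fun n ↦ ⟨coeff n (γ r), hcoeff r n⟩, ?_⟩
    ext n
    exact (coeff_mapAlgHom _ _ _).trans (congrArg S.val (coeff_mk _ _))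
  exact ⟨(AlgEquiv.ofInjective _ hinj).symm.toAlgHom.comp (γ.codRestrict _ hγ),
    AlgHom.ext fun r ↦ congrArg Subtype.val
      ((AlgEquiv.ofInjective _ hinj).apply_symm_apply ⟨γ r, hγ r⟩)⟩

variable {k : Type*} {R Rinf : Type u} [CommRing k] [CommRing R] [Algebra k R] [CommRing Rinf]
  [Algebra k Rinf]
  {e : ∀ (A : Type u) [CommRing A] [Algebra k A], (Rinf →ₐ[k] A) ≃ (R →ₐ[k] A⟦X⟧)}

lemma surjective_arcCoeffHom_universalArc
    (enat : ∀ (A B : Type u) [CommRing A] [Algebra k A] [CommRing B] [Algebra k B]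
      (f : A →ₐ[k] B) (φ : Rinf →ₐ[k] A), e B (f.comp φ) = (mapAlgHom f).comp (e A φ)) :
    Function.Surjective (arcCoeffHom (e Rinf (AlgHom.id k Rinf))) := by
  let S := (arcCoeffHom (e Rinf (AlgHom.id k Rinf))).range
  obtain ⟨β, hβ⟩ := exists_mapAlgHom_val_comp_eq (S := S) _ le_rfl
  have hid : S.val.comp ((e S).symm β) = AlgHom.id k Rinf := (e Rinf).injective <| by
    rw [enat, Equiv.apply_symm_apply, hβ]
  intro x
  have hx : S.val ((e S).symm β x) = x := congr($hid x)
  exact hx ▸ ((e S).symm β x).2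

lemma ker_le_ker_of_arcSpecializes
    (enat : ∀ (A B : Type u) [CommRing A] [Algebra k A] [CommRing B] [Algebra k B]
      (f : A →ₐ[k] B) (φ : Rinf →ₐ[k] A), e B (f.comp φ) = (mapAlgHom f).comp (e A φ))
    {A B : Type u} [CommRing A] [Algebra k A] [CommRing B] [Algebra k B]
    {φ : Rinf →ₐ[k] A} {ψ : Rinf →ₐ[k] B} (h : ArcSpecializes (e A φ) (e B ψ)) :
    RingHom.ker φ ≤ RingHom.ker ψ := by
  have hcoeff {C : Type u} [CommRing C] [Algebra k C] (χ : Rinf →ₐ[k] C) :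
      arcCoeffHom (e C χ) = χ.comp (arcCoeffHom (e Rinf (AlgHom.id k Rinf))) := by
    rw [← arcCoeffHom_mapAlgHom_comp, ← enat, AlgHom.comp_id]
  intro x hx
  obtain ⟨f, rfl⟩ := surjective_arcCoeffHom_universalArc enat x
  rw [ArcSpecializes, hcoeff φ, hcoeff ψ] at h
  exact h hx

end ArcSpace

theorem arc_space_irreducible_of_char_zero_general (k : Type*) [Field k] [CharZero k]
    (R : Type u) [CommRing R] [IrreducibleSpace (PrimeSpectrum R)] [Algebra k R]
    [Algebra.FiniteType k R] (Rinf : Type u) [CommRing Rinf] [Algebra k Rinf]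
    (e : ∀ (A : Type u) [CommRing A] [Algebra k A], (Rinf →ₐ[k] A) ≃ (R →ₐ[k] A⟦X⟧))
    (enat : ∀ (A B : Type u) [CommRing A] [Algebra k A] [CommRing B] [Algebra k B]
      (f : A →ₐ[k] B) (φ : Rinf →ₐ[k] A), e B (f.comp φ) = (mapAlgHom f).comp (e A φ)) :
    IrreducibleSpace (PrimeSpectrum Rinf) := by
  obtain ⟨B, _, _, _, θ, hθ⟩ := exists_arc_arcSpecializes k R
  let ψ : Rinf →ₐ[k] B := (e B).symm θ
  have hψ : RingHom.ker ψ ≤ nilradical Rinf := by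
    rw [nilradical_eq_sInf]
    refine le_sInf fun P (hP : P.IsPrime) ↦ ?_
    let φ : Rinf →ₐ[k] P.ResidueField := Algebra.algHom k _ _
    have hφ : RingHom.ker φ = P := Ideal.ker_algebraMap_residueField P
    exact (ker_le_ker_of_arcSpecializes enat <|
      ((e B).apply_symm_apply θ).symm ▸ hθ (e P.ResidueField φ)).trans_eq hφ
  have hprime : (RingHom.ker ψ).IsPrime := RingHom.ker_isPrime _
  rw [PrimeSpectrum.irreducibleSpace_iff_isPrime_nilradical,
    le_antisymm (nilradical_le_prime _) hψ]
  exact hprime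

/-- Let `k` be an algebraically closed field of characteristic zero and
`R` a finitely generated commutative `k`-algebra that is an integral domain. If `R_∞`
corepresents the arc functor `A ↦ Hom_{k-alg}(R, A[[t]])` (naturally in `A`), then
`Spec R_∞` is an irreducible topological space. (Affine form of: in characteristic zero
the space of arcs of a variety is irreducible.) -/
theorem arc_space_irreducible_of_char_zero (k : Type) [Field k] [IsAlgClosed k]
    [CharZero k] (R : Type) [CommRing R] [IsDomain R] [Algebra k R]
    (hR : Algebra.FiniteType k R)
    (Rinf : Type) [CommRing Rinf] [Algebra k Rinf]
    (e : ∀ (A : Type) [CommRing A] [Algebra k A], (Rinf →ₐ[k] A) ≃ (R →ₐ[k] PowerSeries A))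
    (enat : ∀ (A B : Type) [CommRing A] [Algebra k A] [CommRing B] [Algebra k B]
      (f : A →ₐ[k] B) (φ : Rinf →ₐ[k] A),
      e B (f.comp φ) = (psMapAlgHom f).comp (e A φ)) :
    IrreducibleSpace (PrimeSpectrum Rinf) :=
  arc_space_irreducible_of_char_zero_general k R Rinf e enat
end
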